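/- For every positive integer k and every real K > 0 there exist constants c₁ > 0, c₂ > 0, and a positive integer N, depending only on k and K, such that the following holds. If n ≥ N and A₁, …, A_k ⊆ ℤ are sets each of size n with |Aᵢ + Aᵢ| ≤ K·|Aᵢ| for all i = 1, …, k, then there exists a diagonal set C ⊆ A₁ × ⋯ × A_k with |C + C| ≤ c₁·|C| and |C| ≥ c₂·n. -/

import Mathlib

open Pointwise

/-- `C` is a diagonal set: any two distinct elements of `C` are strictly
comparable in every coordinate, in the same direction. -/
def IsDiagonal {k : ℕ} (C : Finset (Fin k → ℤ)) : Prop :=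
  ∀ x ∈ C, ∀ y ∈ C, x ≠ y → (∀ i, 0 < x i - y i) ∨ (∀ i, x i - y i < 0)

lemma sum_ite_mem_univ_aux {J M : Type*} [Fintype J] [DecidableEq J] [AddCommMonoid M]
    (s : Finset J) (f : J → M) : ∑ j, (if j ∈ s then f j else 0) = ∑ j ∈ s, f j := by
  simp

/-- Coordinates of `x` with respect to a set of frequencies `R`. -/
noncomputable def bohrLift {m : ℕ} (R : Finset (ZMod m)) (x : ZMod m) : R → ℝ :=
  fun r => ((r.1 * x).valMinAbs : ℝ) / m

lemma bohrLift_eq {m : ℕ} [NeZero m] (R : Finset (ZMod m)) (x : ZMod m) (t : R → ℤ)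
    (ht : ∀ r, (t r : ZMod m) = r.1 * x) (hn : ‖(fun r => (t r : ℝ) / m : R → ℝ)‖ < 1 / 2) :
    bohrLift R x = fun r => (t r : ℝ) / m := by
  have hm : (0 : ℝ) < m := by exact_mod_cast Nat.pos_of_ne_zero (NeZero.ne m)
  funext r
  have h1 : |(t r : ℝ) / m| < 1 / 2 := lt_of_le_of_lt (by
    have := norm_le_pi_norm (fun r => (t r : ℝ) / m : R → ℝ) r
    rwa [Real.norm_eq_abs] at this) hn
  rw [abs_div, abs_of_pos hm, div_lt_iff₀ hm, abs_lt] at h1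
  have h2 : (r.1 * x).valMinAbs = t r := by
    rw [ZMod.valMinAbs_spec]
    refine ⟨(ht r).symm, ?_, ?_⟩
    · have : (-(m : ℝ)) < t r * 2 := by linarith
      exact_mod_cast this
    · have : (t r : ℝ) * 2 ≤ m := by linarith
      exact_mod_cast this
  simp [bohrLift, h2]

lemma bohrLift_add {m : ℕ} [NeZero m] (R : Finset (ZMod m)) (x y : ZMod m)
    (h : ‖bohrLift R x‖ + ‖bohrLift R y‖ < 1 / 2) :
    bohrLift R (x + y) = bohrLift R x + bohrLift R y := by
  have e : bohrLift R x + bohrLift R y = fun r : R =>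
      (((r.1 * x).valMinAbs + (r.1 * y).valMinAbs : ℤ) : ℝ) / m := by
    funext r; simp [bohrLift, add_div]
  rw [e]
  apply bohrLift_eq
  · intro r; push_cast; simp [mul_add]
  · rw [← e]; exact lt_of_le_of_lt (norm_add_le _ _) h

lemma bohrLift_sub {m : ℕ} [NeZero m] (R : Finset (ZMod m)) (x y : ZMod m)
    (h : ‖bohrLift R x‖ + ‖bohrLift R y‖ < 1 / 2) :
    bohrLift R (x - y) = bohrLift R x - bohrLift R y := by
  have e : bohrLift R x - bohrLift R y = fun r : R =>
      (((r.1 * x).valMinAbs - (r.1 * y).valMinAbs : ℤ) : ℝ) / m := by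
    funext r; simp [bohrLift, sub_div]
  rw [e]
  apply bohrLift_eq
  · intro r; push_cast; simp [mul_sub]
  · rw [← e]; exact lt_of_le_of_lt (norm_sub_le _ _) h

lemma bohrLift_zero {m : ℕ} (R : Finset (ZMod m)) : bohrLift R 0 = 0 := by
  funext r; simp [bohrLift]

lemma bohrLift_sum {m : ℕ} [NeZero m] (R : Finset (ZMod m)) {J : Type*} (s : Finset J)
    (c : J → ℤ) (x : J → ZMod m)
    (h : ‖∑ j ∈ s, (c j : ℝ) • bohrLift R (x j)‖ < 1 / 2) :
    bohrLift R (∑ j ∈ s, (c j : ZMod m) * x j) = ∑ j ∈ s, (c j : ℝ) • bohrLift R (x j) := by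
  have e : ∑ j ∈ s, (c j : ℝ) • bohrLift R (x j) = fun r : R =>
      ((∑ j ∈ s, c j * (r.1 * x j).valMinAbs : ℤ) : ℝ) / m := by
    funext r; simp [bohrLift, Finset.sum_div, mul_div_assoc]
  rw [e]
  apply bohrLift_eq
  · intro r; rw [Finset.mul_sum, Int.cast_sum]
    exact Finset.sum_congr rfl fun j _ => by
      rw [Int.cast_mul, ZMod.coe_valMinAbs]; ring
  · rw [← e]; exact h

/-- Local additivity of an integer-valued function on the Bohr set of radius `1/4`. -/
def LocAdd {m : ℕ} (R : Finset (ZMod m)) (l : ZMod m → ℤ) : Prop :=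
  ∀ x y, ‖bohrLift R x‖ ≤ 1 / 4 → ‖bohrLift R y‖ ≤ 1 / 4 → ‖bohrLift R (x + y)‖ ≤ 1 / 4 →
    l (x + y) = l x + l y

lemma LocAdd.zero {m : ℕ} {R : Finset (ZMod m)} {l : ZMod m → ℤ} (h : LocAdd R l) : l 0 = 0 := by
  have := h 0 0 (by simp [bohrLift_zero]) (by simp [bohrLift_zero]) (by simp [bohrLift_zero])
  simp at this; exact this

lemma LocAdd.sum {m : ℕ} [NeZero m] {R : Finset (ZMod m)} {l : ZMod m → ℤ} (h : LocAdd R l)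
    {J : Type*} (s : Finset J) (x : J → ZMod m) (ρ : ℝ) (hx : ∀ j, ‖bohrLift R (x j)‖ ≤ ρ)
    (hρ0 : 0 ≤ ρ) (hρ : s.card * ρ ≤ 1 / 8) :
    ‖bohrLift R (∑ j ∈ s, x j)‖ ≤ s.card * ρ ∧ l (∑ j ∈ s, x j) = ∑ j ∈ s, l (x j) := by
  classical
  induction s using Finset.induction_on with
  | empty => simp [bohrLift_zero, h.zero]
  | insert a s ha ih =>
    rw [Finset.card_insert_of_notMem ha] at hρ ⊢
    push_cast at hρ ⊢
    have hs : 0 ≤ (s.card : ℝ) * ρ := by positivity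
    obtain ⟨h1, h2⟩ := ih (by linarith)
    rw [Finset.sum_insert ha, Finset.sum_insert ha]
    have hxa := hx a
    have e := bohrLift_add R (x a) (∑ j ∈ s, x j) (by linarith)
    have hb : ‖bohrLift R (x a + ∑ j ∈ s, x j)‖ ≤ (s.card + 1) * ρ := by
      rw [e]; refine (norm_add_le _ _).trans (by linarith)
    refine ⟨hb, ?_⟩
    rw [h _ _ (by linarith) (by linarith) (by linarith), h2]

/-- The key claim: convex combinations of positive small elements stay away from zero. -/
lemma convex_comb_far {m : ℕ} [NeZero m] {R : Finset (ZMod m)} {l : ZMod m → ℤ} (h : LocAdd R l)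
    {J : Type*} [Fintype J] (D : ℕ) (hJ : Fintype.card J ≤ D) (hD : 0 < D)
    (x : J → ZMod m) (hx : ∀ j, ‖bohrLift R (x j)‖ ≤ 1 / (8 * D)) (hl : ∀ j, 0 < l (x j))
    (p : J → ℝ) (hp : ∀ j, 0 < p j) (hs : ∑ j, p j = 1) :
    1 / (16 * D * m) ≤ ‖∑ j, p j • bohrLift R (x j)‖ := by
  classical
  have hm : (0 : ℝ) < m := by exact_mod_cast Nat.pos_of_ne_zero (NeZero.ne m)
  have hDr : (0 : ℝ) < D := by exact_mod_cast hD
  have hJr : (Fintype.card J : ℝ) ≤ D := by exact_mod_cast hJ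
  have hD8 : (D : ℝ) * (1 / (8 * D)) = 1 / 8 := by field_simp
  by_contra hcon
  push Not at hcon
  set z := ∑ j, p j • bohrLift R (x j) with hz
  let c : ℕ → J → ℤ := fun q j => ⌊(q : ℝ) * p j⌋
  let b : ℕ → ZMod m := fun q => ∑ j, (c q j : ZMod m) * x j
  have hp1 : ∀ j, p j ≤ 1 := fun j => by
    rw [← hs]; exact Finset.single_le_sum (fun i _ => (hp i).le) (Finset.mem_univ j)
  have hb : ∀ q : ℕ, q ≤ D * m → ‖bohrLift R (b q)‖ ≤ 1 / 4 := by
    intro q hq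
    have hq' : (q : ℝ) ≤ D * m := by exact_mod_cast hq
    have e : ∑ j, (c q j : ℝ) • bohrLift R (x j)
        = (q : ℝ) • z - ∑ j, (Int.fract ((q : ℝ) * p j)) • bohrLift R (x j) := by
      rw [hz, Finset.smul_sum, ← Finset.sum_sub_distrib]
      refine Finset.sum_congr rfl fun j _ => ?_
      rw [smul_smul, ← sub_smul, Int.self_sub_fract]
    have hn : ‖∑ j, (c q j : ℝ) • bohrLift R (x j)‖ ≤ 1 / 4 := by
      rw [e]
      have h1 : ‖(q : ℝ) • z‖ ≤ 1 / 16 := by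
        rw [norm_smul, Real.norm_eq_abs, abs_of_nonneg (Nat.cast_nonneg q)]
        calc (q : ℝ) * ‖z‖ ≤ (D * m) * (1 / (16 * D * m)) :=
              mul_le_mul hq' hcon.le (norm_nonneg _) (by positivity)
          _ = 1 / 16 := by field_simp
      have h2 : ‖∑ j, (Int.fract ((q : ℝ) * p j)) • bohrLift R (x j)‖ ≤ 1 / 8 := by
        refine (norm_sum_le _ _).trans ?_
        calc ∑ j, ‖(Int.fract ((q : ℝ) * p j)) • bohrLift R (x j)‖
            ≤ ∑ _j : J, 1 / (8 * (D : ℝ)) := by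
              refine Finset.sum_le_sum fun j _ => ?_
              rw [norm_smul, Real.norm_eq_abs, abs_of_nonneg (Int.fract_nonneg _)]
              calc _ ≤ 1 * (1 / (8 * (D : ℝ))) :=
                    mul_le_mul (Int.fract_lt_one _).le (hx j) (norm_nonneg _) zero_le_one
                _ = _ := one_mul _
          _ = (Fintype.card J : ℝ) * (1 / (8 * D)) := by simp
          _ ≤ D * (1 / (8 * D)) := by gcongr
          _ = 1 / 8 := hD8
      refine (norm_sub_le _ _).trans (by linarith)
    rw [show bohrLift R (b q) = _ from bohrLift_sum R Finset.univ (c q) x (by linarith)]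
    exact hn
  have hlb : ∀ q : ℕ, q ≤ D * m → l (b q) = ∑ j, c q j * l (x j) := by
    intro q
    induction q with
    | zero => intro _; simp [b, c, h.zero]
    | succ q ih =>
      intro hq
      have hcq : ∀ j, c (q + 1) j = c q j ∨ c (q + 1) j = c q j + 1 := by
        intro j
        have h1 : c q j ≤ c (q + 1) j := by
          apply Int.floor_le_floor
          have := hp j
          push_cast; nlinarith
        have h2 : c (q + 1) j ≤ c q j + 1 := by
          have : c q j + 1 = ⌊(q : ℝ) * p j + 1⌋ := by simp [c]
          rw [this]
          apply Int.floor_le_floor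
          have := hp1 j
          push_cast; nlinarith
        omega
      let s : Finset J := Finset.univ.filter fun j => c (q + 1) j = c q j + 1
      have hsc : (s.card : ℝ) * (1 / (8 * D)) ≤ 1 / 8 := by
        rw [← hD8]
        have : (s.card : ℝ) ≤ D := by exact_mod_cast (Finset.card_le_univ s).trans hJ
        gcongr
      obtain ⟨h1, h2⟩ := h.sum s x (1 / (8 * D)) hx (by positivity) hsc
      have hc : ∀ j, c (q + 1) j = c q j + if j ∈ s then 1 else 0 := by
        intro j
        by_cases hj : c (q + 1) j = c q j + 1
        · simp [s, hj]
        · simp [s, (hcq j).resolve_right hj]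
      have hbe : b (q + 1) = b q + ∑ j ∈ s, x j := by
        simp only [b]
        rw [← sum_ite_mem_univ_aux s x, ← Finset.sum_add_distrib]
        refine Finset.sum_congr rfl fun j _ => ?_
        rw [hc j]; push_cast; split_ifs <;> ring
      have hq1 := hb q (by omega)
      have hq2 := hb (q + 1) hq
      rw [hbe] at hq2 ⊢
      rw [h _ _ hq1 (by linarith) hq2, ih (by omega), h2, ← sum_ite_mem_univ_aux s,
        ← Finset.sum_add_distrib]
      refine Finset.sum_congr rfl fun j _ => ?_
      rw [hc j]; split_ifs <;> ring
  -- a large weight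
  obtain ⟨j0, hj0⟩ : ∃ j, 1 / (D : ℝ) ≤ p j := by
    by_contra hno
    push Not at hno
    have hne : (Finset.univ : Finset J).Nonempty := by
      by_contra hne
      rw [Finset.not_nonempty_iff_eq_empty] at hne
      simp [hne] at hs
    have : ∑ j, p j < ∑ _j : J, 1 / (D : ℝ) := Finset.sum_lt_sum_of_nonempty hne fun j _ => hno j
    rw [hs] at this
    simp at this
    have h3 : (Fintype.card J : ℝ) * (D : ℝ)⁻¹ ≤ D * (D : ℝ)⁻¹ := by gcongr
    rw [mul_inv_cancel₀ hDr.ne'] at h3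
    linarith
  have hmono : ∀ i i' : ℕ, i < i' → i' ≤ m → l (b (D * i)) < l (b (D * i')) := by
    intro i i' hii hi'
    rw [hlb _ (Nat.mul_le_mul_left D (by omega)), hlb _ (Nat.mul_le_mul_left D hi')]
    have hii' : (i : ℝ) + 1 ≤ i' := by exact_mod_cast hii
    refine Finset.sum_lt_sum (fun j _ => ?_) ⟨j0, Finset.mem_univ _, ?_⟩
    · refine mul_le_mul_of_nonneg_right ?_ (hl j).le
      apply Int.floor_le_floor
      have := hp j
      push_cast
      gcongr
    · refine mul_lt_mul_of_pos_right ?_ (hl j0)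
      have : c (D * i) j0 + 1 ≤ c (D * i') j0 := by
        have e : c (D * i) j0 + 1 = ⌊((D * i : ℕ) : ℝ) * p j0 + 1⌋ := by simp [c]
        rw [e]
        apply Int.floor_le_floor
        push_cast
        rw [div_le_iff₀ hDr] at hj0
        have h0 := hp j0
        have : (D : ℝ) * (i + 1) * p j0 ≤ D * i' * p j0 := by gcongr
        nlinarith
      omega
  have hinj : Function.Injective (fun i : Fin (m + 1) => b (D * i)) := by
    intro i i' hii
    simp only at hii
    rcases lt_trichotomy (i : ℕ) i' with hlt | heq | hgt
    · have := hmono i i' hlt (by omega); rw [hii] at this; omega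
    · exact Fin.ext heq
    · have := hmono i' i hgt (by omega); rw [hii] at this; omega
  have := Fintype.card_le_of_injective _ hinj
  simp [ZMod.card] at this

/-- A linear functional that separates positive small elements. -/
lemma exists_functional {m : ℕ} [NeZero m] {R : Finset (ZMod m)} {l : ZMod m → ℤ} (h : LocAdd R l)
    (D : ℕ) (hD : R.card + 1 ≤ D) :
    ∃ g : (R → ℝ) →ₗ[ℝ] ℝ,
      (∀ x, ‖bohrLift R x‖ ≤ 1 / (8 * D) → 0 < l x → 1 ≤ g (bohrLift R x)) ∧
      ∀ y, ‖y‖ < 1 → |g y| ≤ 16 * D * m := by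
  have hm : (0 : ℝ) < m := by exact_mod_cast Nat.pos_of_ne_zero (NeZero.ne m)
  have hDr : (0 : ℝ) < D := by exact_mod_cast (show 0 < D by omega)
  let S : Set (R → ℝ) := Set.image (bohrLift R) {x | ‖bohrLift R x‖ ≤ 1 / (8 * D) ∧ 0 < l x}
  set ε : ℝ := 1 / (16 * D * m) with hε
  have hε0 : 0 < ε := by positivity
  have hdisj : Disjoint (Metric.ball (0 : R → ℝ) ε) (convexHull ℝ S) := by
    rw [Set.disjoint_left]
    intro z hz1 hz2
    rw [mem_ball_zero_iff] at hz1
    obtain ⟨J, _, y, w, hy, hai, hw, hw1, hwz⟩ := eq_pos_convex_span_of_mem_convexHull hz2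
    have hcard : Fintype.card J ≤ D := by
      have := hai.card_le_finrank_succ
      have h2 := Submodule.finrank_le (vectorSpan ℝ (Set.range y))
      simp at h2
      omega
    have hy' : ∀ j, ∃ x, (‖bohrLift R x‖ ≤ 1 / (8 * D) ∧ 0 < l x) ∧ bohrLift R x = y j :=
      fun j => hy ⟨j, rfl⟩
    choose x hx hxy using hy'
    have := convex_comb_far h D hcard (by omega) x (fun j => (hx j).1) (fun j => (hx j).2) w hw hw1
    simp only [hxy, hwz] at this
    linarith
  obtain ⟨f, u, hf1, hf2⟩ := geometric_hahn_banach_open (convex_ball _ _) Metric.isOpen_ball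
    (convex_convexHull ℝ S) hdisj
  have hu : 0 < u := by simpa using hf1 0 (by simpa using hε0)
  refine ⟨u⁻¹ • (f : (R → ℝ) →ₗ[ℝ] ℝ), ?_, ?_⟩
  · intro x hx hlx
    have := hf2 (bohrLift R x) (subset_convexHull ℝ S ⟨x, ⟨hx, hlx⟩, rfl⟩)
    simp
    rw [← div_eq_inv_mul, le_div_iff₀ hu]; linarith
  · have key : ∀ y : R → ℝ, ‖y‖ < 1 → u⁻¹ * f y ≤ 16 * D * m := by
      intro y hy
      have := hf1 (ε • y) (by
        rw [mem_ball_zero_iff, norm_smul, Real.norm_eq_abs, abs_of_pos hε0]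
        nlinarith)
      simp at this
      rw [← div_eq_inv_mul, div_le_iff₀ hu]
      have e : (16 * D * m : ℝ) = ε⁻¹ := by rw [hε]; simp
      rw [e, ← div_eq_inv_mul, le_div_iff₀ hε0]; linarith
    intro y hy
    rw [abs_le]
    simp only [LinearMap.smul_apply, smul_eq_mul, ContinuousLinearMap.coe_coe]
    constructor
    · have := key (-y) (by simpa using hy)
      simp at this
      linarith
    · exact key y hy

lemma bohr_size {m : ℕ} [NeZero m] (R : Finset (ZMod m)) (M : ℕ) (hM : 3 ≤ M) :
    (m : ℝ) / (M : ℝ) ^ R.card ≤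
      (Finset.univ.filter fun x : ZMod m => ‖bohrLift R x‖ ≤ 1 / M).card := by
  classical
  have hm0 : 0 < m := Nat.pos_of_ne_zero (NeZero.ne m)
  have hm : (0 : ℝ) < m := by exact_mod_cast hm0
  have hMr : (0 : ℝ) < M := by exact_mod_cast (show 0 < M by omega)
  have : NeZero M := ⟨by omega⟩
  let F : ZMod m → (R → Fin M) := fun x r => ⟨(r.1 * x).val * M / m, by
    rw [Nat.div_lt_iff_lt_mul hm0, mul_comm]
    exact Nat.mul_lt_mul_of_pos_left (ZMod.val_lt _) (by omega)⟩
  obtain ⟨y, hy⟩ := Fintype.exists_le_card_fiber_of_nsmul_le_card (M := ℝ) F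
    (b := (m : ℝ) / (M : ℝ) ^ R.card) (by
      simp [ZMod.card]
      field_simp
      exact le_refl _)
  refine hy.trans ?_
  have hpos : 0 < (Finset.univ.filter fun x => F x = y).card := by
    have : (0 : ℝ) < (Finset.univ.filter fun x => F x = y).card :=
      lt_of_lt_of_le (by positivity) hy
    exact_mod_cast this
  obtain ⟨x0, hx0⟩ := Finset.card_pos.1 hpos
  norm_cast
  refine Finset.card_le_card_of_injOn (fun x => x - x0) ?_ ?_
  · intro x hx
    have hxy : F x = y := by simpa using hx
    have hx0y : F x0 = y := by simpa using hx0
    have hb : ∀ r : R, |((((r.1 * x).val : ℤ) - ((r.1 * x0).val : ℤ) : ℤ) : ℝ) / m| ≤ 1 / M := by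
      intro r
      have h1 : (r.1 * x).val * M / m = (r.1 * x0).val * M / m := by
        have := congrFun (hxy.trans hx0y.symm) r
        simpa [F] using this
      have h2 := Nat.div_add_mod ((r.1 * x).val * M) m
      have h3 := Nat.div_add_mod ((r.1 * x0).val * M) m
      have h4 := Nat.mod_lt ((r.1 * x).val * M) hm0
      have h5 := Nat.mod_lt ((r.1 * x0).val * M) hm0
      rw [h1] at h2
      set a := (r.1 * x).val
      set b := (r.1 * x0).val
      have h2' : (m : ℝ) * ((b * M / m : ℕ) : ℝ) + ((a * M % m : ℕ) : ℝ) = a * M := by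
        exact_mod_cast h2
      have h3' : (m : ℝ) * ((b * M / m : ℕ) : ℝ) + ((b * M % m : ℕ) : ℝ) = b * M := by
        exact_mod_cast h3
      have h4' : ((a * M % m : ℕ) : ℝ) < m := by exact_mod_cast h4
      have h5' : ((b * M % m : ℕ) : ℝ) < m := by exact_mod_cast h5
      have h6 : (0 : ℝ) ≤ ((a * M % m : ℕ) : ℝ) := Nat.cast_nonneg _
      have h7 : (0 : ℝ) ≤ ((b * M % m : ℕ) : ℝ) := Nat.cast_nonneg _
      rw [abs_div, abs_of_pos hm, div_le_div_iff₀ hm hMr]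
      push_cast
      rw [← abs_of_pos hMr, ← abs_mul, abs_le]
      constructor <;> linarith
    have hn : ‖(fun r : R => ((((r.1 * x).val : ℤ) - ((r.1 * x0).val : ℤ) : ℤ) : ℝ) / m)‖
        ≤ 1 / M := by
      rw [pi_norm_le_iff_of_nonneg (by positivity)]
      intro r
      rw [Real.norm_eq_abs]
      exact hb r
    have hlt : (1 : ℝ) / M < 1 / 2 := by
      apply one_div_lt_one_div_of_lt (by norm_num)
      exact_mod_cast (show 2 < M by omega)
    have := bohrLift_eq R (x - x0)
      (fun r : R => ((r.1 * x).val : ℤ) - ((r.1 * x0).val : ℤ)) (by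
        intro r; push_cast; simp [mul_sub]) (by linarith)
    simp only [Finset.coe_filter, Finset.mem_univ, true_and, Set.mem_ofPred_eq]
    rw [this]; exact hn
  · intro a _ b _ hab
    simpa using hab

lemma plunnecke_real (A : Finset ℤ) (hA : A.Nonempty) (K : ℝ)
    (h : ((A + A).card : ℝ) ≤ K * A.card) (a b : ℕ) :
    ((a • A - b • A).card : ℝ) ≤ K ^ (a + b) * A.card := by
  have h1 := Finset.pluennecke_ruzsa_inequality_nsmul_sub_nsmul_add hA A a b
  have hc : (0 : ℝ) < A.card := by exact_mod_cast hA.card_pos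
  have h2 : ((a • A - b • A).card : ℝ) ≤ (((A + A).card : ℝ) / A.card) ^ (a + b) * A.card := by
    have h3 := (NNRat.cast_le (K := ℝ)).2 h1
    push_cast at h3
    exact h3
  refine h2.trans ?_
  gcongr
  rw [div_le_iff₀ hc]; exact h

/-- A Bohr-set model of a set of small doubling. -/
def HasBohrModel (K : ℝ) (C₀ d : ℕ) : Prop :=
  ∀ A : Finset ℤ, A.Nonempty → ((A + A).card : ℝ) ≤ K * A.card →
    ∃ (m : ℕ) (_ : NeZero m) (R : Finset (ZMod m)) (l : ZMod m → ℤ),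
      m ≤ C₀ * A.card ∧ A.card ≤ m ∧ R.card ≤ d ∧ LocAdd R l ∧
      (∀ x, ‖bohrLift R x‖ ≤ 1 / 4 → l x ∈ 2 • A - 2 • A) ∧
      ∀ x y, ‖bohrLift R x‖ ≤ 1 / 4 → ‖bohrLift R y‖ ≤ 1 / 4 → l x = l y → x = y

lemma exists_quasi_hom (K : ℝ) (hK : 1 ≤ K) (C₀ d : ℕ) (hmod : HasBohrModel K C₀ d) :
    ∃ (c : ℝ) (X : ℕ), 0 < c ∧ ∀ A : Finset ℤ, A.Nonempty → ((A + A).card : ℝ) ≤ K * A.card →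
      ∃ (A' : Finset ℤ) (f h : ℤ → ℤ), A' ⊆ A ∧ c * A.card ≤ A'.card ∧
        (∀ a ∈ A', ∀ b ∈ A', a < b → f a < f b) ∧
        (∀ a ∈ A', |f a| ≤ X * A.card) ∧
        (∀ a ∈ A', ∀ b ∈ A', f a + f b ≤ h (a + b) ∧ h (a + b) ≤ f a + f b + 1) ∧
        (∀ a ∈ A', ∀ b ∈ A', ∀ a' ∈ A', ∀ b' ∈ A', h (a + b) = h (a' + b') →
          a + b = a' + b') := by
  classical
  set D : ℕ := d + 1 with hD
  set M : ℕ := 32 * D with hM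
  have hMr : (0 : ℝ) < M := by exact_mod_cast (show 0 < M by omega)
  have hDr : (0 : ℝ) < D := by exact_mod_cast (show 0 < D by omega)
  have hDr1 : (1 : ℝ) ≤ D := by exact_mod_cast (show 1 ≤ D by omega)
  refine ⟨1 / (M ^ d * K ^ 5), 16 * D * C₀, by positivity, ?_⟩
  intro A hA hAA
  obtain ⟨m, _, R, l, hmC, hAm, hRd, hadd, hl2, hinj⟩ := hmod A hA hAA
  have hn : (0 : ℝ) < A.card := by exact_mod_cast hA.card_pos
  obtain ⟨g, hg1, hg2⟩ := exists_functional hadd D (by omega)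
  set B : Finset (ZMod m) := Finset.univ.filter fun x : ZMod m => ‖bohrLift R x‖ ≤ 1 / M with hB
  have hBcard : (A.card : ℝ) / M ^ d ≤ B.card := by
    refine le_trans ?_ (bohr_size R M (by omega))
    have h1 : (A.card : ℝ) ≤ m := by exact_mod_cast hAm
    have h2 : (M : ℝ) ^ R.card ≤ M ^ d :=
      pow_le_pow_right₀ (by exact_mod_cast (show 1 ≤ M by omega)) hRd
    gcongr
  -- facts on radii
  have hM4 : (1 : ℝ) / M = 1 / (8 * D) / 4 := by rw [hM]; push_cast; field_simp; norm_num
  set ρ : ℝ := 1 / M with hρ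
  have hρ0 : 0 < ρ := by positivity
  have hρD : 4 * ρ = 1 / (8 * D) := by rw [hM4]; ring
  have hρs : 4 * ρ ≤ 1 / 8 := by
    rw [hρD]
    apply one_div_le_one_div_of_le (by norm_num); linarith
  have hBm : ∀ x, x ∈ B ↔ ‖bohrLift R x‖ ≤ ρ := by intro x; simp [hB]
  -- translate
  have hT := plunnecke_real A hA K hAA 3 2
  set T := 3 • A - 2 • A with hTdef
  have hTne : T.Nonempty := by
    simpa [hTdef] using ⟨hA.nsmul, hA.nsmul⟩
  have hTr : (0 : ℝ) < T.card := by exact_mod_cast hTne.card_pos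
  obtain ⟨t, htT, ht⟩ := Finset.exists_le_card_fiber_of_nsmul_le_card_of_maps_to (M := ℝ)
    (s := A ×ˢ B) (t := T) (f := fun q => q.1 - l q.2)
    (b := (A.card * B.card : ℝ) / T.card) (by
      rintro ⟨a, b⟩ hab
      rw [Finset.mem_product] at hab
      have h1 := hl2 b (by have := (hBm b).1 hab.2; linarith)
      rw [Finset.mem_sub] at h1
      obtain ⟨x, hx, y, hy, hxy⟩ := h1
      rw [hTdef, Finset.mem_sub]
      refine ⟨y + a, ?_, x, hx, by simp only; omega⟩
      rw [succ_nsmul]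
      exact Finset.add_mem_add hy hab.1) hTne (by
      rw [Finset.card_product, nsmul_eq_mul, mul_div_cancel₀ _ hTr.ne']; push_cast; exact le_refl _)
  -- the inverse of l
  let β : ℤ → ZMod m := fun s =>
    if h : ∃ b, ‖bohrLift R b‖ ≤ 1 / 4 ∧ l b = s then h.choose else 0
  have hβ : ∀ b, ‖bohrLift R b‖ ≤ 1 / 4 → β (l b) = b := by
    intro b hb
    have hex : ∃ b', ‖bohrLift R b'‖ ≤ 1 / 4 ∧ l b' = l b := ⟨b, hb, rfl⟩
    simp only [β]
    rw [dif_pos hex]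
    exact hinj _ _ hex.choose_spec.1 hb hex.choose_spec.2
  let G : ZMod m → ℝ := fun b => g (bohrLift R b)
  -- separation
  have hsep : ∀ b b', ‖bohrLift R b‖ ≤ 2 * ρ → ‖bohrLift R b'‖ ≤ 2 * ρ → l b < l b' →
      G b + 1 ≤ G b' := by
    intro b b' hb hb' hlt
    have e := bohrLift_sub R b' b (by linarith)
    have hn : ‖bohrLift R (b' - b)‖ ≤ 4 * ρ := by
      rw [e]; exact (norm_sub_le _ _).trans (by linarith)
    have h1 : l b' = l (b' - b) + l b := by
      have := hadd (b' - b) b (by linarith) (by linarith) (by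
        rw [sub_add_cancel]; linarith)
      rwa [sub_add_cancel] at this
    have h2 := hg1 (b' - b) (by linarith) (by omega)
    rw [e, map_sub] at h2
    simp only [G]; linarith
  let A' := A.filter fun a => ∃ b ∈ B, a = t + l b
  have hA' : ∀ a ∈ A', ∃ b, ‖bohrLift R b‖ ≤ ρ ∧ a - t = l b ∧ β (a - t) = b := by
    intro a ha
    obtain ⟨_, b, hb, hab⟩ := Finset.mem_filter.1 ha
    have hb' := (hBm b).1 hb
    have e : a - t = l b := by omega
    exact ⟨b, hb', e, by rw [e]; exact hβ b (by linarith)⟩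
  have hsum : ∀ b b', ‖bohrLift R b‖ ≤ ρ → ‖bohrLift R b'‖ ≤ ρ →
      ‖bohrLift R (b + b')‖ ≤ 2 * ρ ∧ l (b + b') = l b + l b' ∧ G (b + b') = G b + G b' := by
    intro b b' hb hb'
    have e := bohrLift_add R b b' (by linarith)
    have hn : ‖bohrLift R (b + b')‖ ≤ 2 * ρ := by
      rw [e]; exact (norm_add_le _ _).trans (by linarith)
    refine ⟨hn, hadd _ _ (by linarith) (by linarith) (by linarith), ?_⟩
    simp only [G]; rw [e, map_add]
  have hA'' : ∀ a ∈ A', ∀ a' ∈ A', ∃ b, ‖bohrLift R b‖ ≤ 2 * ρ ∧ a + a' - 2 * t = l b ∧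
      β (a + a' - 2 * t) = b ∧ G b = G (β (a - t)) + G (β (a' - t)) := by
    intro a ha a' ha'
    obtain ⟨b, hb, e, hbe⟩ := hA' a ha
    obtain ⟨b', hb', e', hbe'⟩ := hA' a' ha'
    obtain ⟨h1, h2, h3⟩ := hsum b b' hb hb'
    have e2 : a + a' - 2 * t = l (b + b') := by omega
    exact ⟨b + b', h1, e2, by rw [e2]; exact hβ _ (by linarith), by rw [hbe, hbe', h3]⟩
  refine ⟨A', fun a => ⌊G (β (a - t))⌋, fun s => ⌊G (β (s - 2 * t))⌋,
    Finset.filter_subset _ _, ?_, ?_, ?_, ?_, ?_⟩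
  · have hc : ((Finset.filter (fun q => q.1 - l q.2 = t) (A ×ˢ B)).card : ℝ) ≤ A'.card := by
      norm_cast
      refine Finset.card_le_card_of_injOn Prod.fst ?_ ?_
      · rintro ⟨a, b⟩ hab
        simp only [Finset.coe_filter, Finset.mem_product, Set.mem_ofPred_eq] at hab
        simp only [A', Finset.coe_filter, Set.mem_ofPred_eq]
        exact ⟨hab.1.1, b, hab.1.2, by omega⟩
      · rintro ⟨a, b⟩ hab ⟨a', b'⟩ hab' haa
        simp only [Finset.coe_filter, Finset.mem_product, Set.mem_ofPred_eq] at hab hab' haa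
        subst haa
        have h1 := (hBm b).1 hab.1.2
        have h2 := (hBm b').1 hab'.1.2
        have := hinj b b' (by linarith) (by linarith) (by omega)
        rw [this]
    refine le_trans ?_ (ht.trans hc)
    calc 1 / (M ^ d * K ^ 5) * (A.card : ℝ)
        = (A.card * (A.card / M ^ d)) / (K ^ 5 * A.card) := by field_simp
      _ ≤ (A.card * B.card : ℝ) / T.card := by gcongr
  · intro a ha a' ha' hlt
    obtain ⟨b, hb, e, hbe⟩ := hA' a ha
    obtain ⟨b', hb', e', hbe'⟩ := hA' a' ha'
    simp only
    rw [hbe, hbe']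
    have := hsep b b' (by linarith) (by linarith) (by omega)
    have h1 : ⌊G b + 1⌋ ≤ ⌊G b'⌋ := Int.floor_le_floor this
    rw [Int.floor_add_one] at h1
    omega
  · intro a ha
    obtain ⟨b, hb, e, hbe⟩ := hA' a ha
    simp only
    rw [hbe]
    have h1 : |G b| ≤ 16 * D * m := hg2 _ (by linarith)
    rw [abs_le] at h1
    have h2 : |⌊G b⌋| ≤ ((16 * D * m : ℕ) : ℤ) := by
      rw [abs_le]
      constructor
      · rw [Int.le_floor]; push_cast; linarith
      · have := Int.floor_le (G b)
        have h3 : ((⌊G b⌋ : ℤ) : ℝ) ≤ 16 * D * m := by linarith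
        exact_mod_cast h3
    refine h2.trans ?_
    have : 16 * D * m ≤ 16 * D * C₀ * A.card := by
      rw [mul_assoc (16 * D) C₀]; exact Nat.mul_le_mul_left _ hmC
    exact_mod_cast this
  · intro a ha a' ha'
    obtain ⟨b, hb, e, hbe, hG⟩ := hA'' a ha a' ha'
    simp only
    rw [hbe, hG]
    exact ⟨Int.le_floor_add _ _, by have := Int.le_floor_add_floor (G (β (a - t))) (G (β (a' - t))); omega⟩
  · intro a ha a' ha' c hc c' hc' heq
    obtain ⟨b, hb, e, hbe, -⟩ := hA'' a ha a' ha'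
    obtain ⟨b', hb', e', hbe', -⟩ := hA'' c hc c' hc'
    simp only at heq
    rw [hbe, hbe'] at heq
    rcases lt_trichotomy (l b) (l b') with hlt | heq' | hgt
    · have := hsep b b' hb hb' hlt
      have h1 : ⌊G b + 1⌋ ≤ ⌊G b'⌋ := Int.floor_le_floor this
      rw [Int.floor_add_one] at h1
      omega
    · omega
    · have := hsep b' b hb' hb hgt
      have h1 : ⌊G b' + 1⌋ ≤ ⌊G b⌋ := Int.floor_le_floor this
      rw [Int.floor_add_one] at h1
      omega

/-- Bogolyubov's lemma in `ZMod m`. -/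
lemma bogolyubov {m : ℕ} [NeZero m] (A : Finset (ZMod m)) (hA : A.Nonempty) (α : ℝ) (hα : 0 < α)
    (hαA : α * m ≤ A.card) :
    ∃ R : Finset (ZMod m), (R.card : ℝ) ≤ 2 / α ^ 2 ∧ ∀ x, ‖bohrLift R x‖ ≤ 1 / 4 →
      ∃ a ∈ A, ∃ b ∈ A, ∃ c ∈ A, ∃ d ∈ A, x = a + b - c - d := by
  classical
  have hm : (0 : ℝ) < m := by exact_mod_cast Nat.pos_of_ne_zero (NeZero.ne m)
  have hn : (0 : ℝ) < A.card := by exact_mod_cast hA.card_pos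
  let ψ : AddChar (ZMod m) ℂ := ZMod.stdAddChar
  have hprim : ψ.IsPrimitive := ZMod.isPrimitive_stdAddChar m
  let F : ZMod m → ℂ := fun ξ => ∑ a ∈ A, ψ (ξ * a)
  have hconj : ∀ ξ, (starRingEnd ℂ) (F ξ) = ∑ a ∈ A, ψ (ξ * (-a)) := by
    intro ξ
    simp only [F, map_sum]
    refine Finset.sum_congr rfl fun a _ => ?_
    rw [mul_neg, AddChar.map_neg_eq_conj]
  have horth : ∀ b : ZMod m, ∑ ξ, ψ (ξ * b) = if b = 0 then (m : ℂ) else 0 := by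
    intro b
    have := AddChar.sum_mulShift b hprim
    rw [this]; simp [ZMod.card]
  have hsq : ∀ ξ, ((‖F ξ‖ ^ 2 : ℝ) : ℂ) = F ξ * (starRingEnd ℂ) (F ξ) := by
    intro ξ; rw [Complex.mul_conj, Complex.normSq_eq_norm_sq]
  -- Parseval
  have hpars : ∑ ξ, ‖F ξ‖ ^ 2 = m * A.card := by
    have : ((∑ ξ, ‖F ξ‖ ^ 2 : ℝ) : ℂ) = ((m * A.card : ℝ) : ℂ) := by
      rw [Complex.ofReal_sum]
      calc ∑ ξ, ((‖F ξ‖ ^ 2 : ℝ) : ℂ) = ∑ ξ, ∑ a ∈ A, ∑ b ∈ A, ψ (ξ * (a - b)) := by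
            refine Finset.sum_congr rfl fun ξ _ => ?_
            rw [hsq, hconj, Finset.sum_mul_sum]
            refine Finset.sum_congr rfl fun a _ => Finset.sum_congr rfl fun b _ => ?_
            rw [← AddChar.map_add_eq_mul]; congr 1; ring
        _ = ∑ a ∈ A, ∑ b ∈ A, ∑ ξ, ψ (ξ * (a - b)) := by
            rw [Finset.sum_comm]
            refine Finset.sum_congr rfl fun a _ => ?_
            rw [Finset.sum_comm]
        _ = ∑ a ∈ A, ∑ b ∈ A, if a = b then (m : ℂ) else 0 := by
            simp only [horth, sub_eq_zero]
        _ = ((m * A.card : ℝ) : ℂ) := by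
            simp [mul_comm]
    exact_mod_cast this
  have hF0 : ‖F 0‖ ^ 2 = (A.card : ℝ) ^ 2 := by simp [F]
  have hα1 : α ≤ 1 := by
    have h1 : (A.card : ℝ) ≤ m := by
      have := Finset.card_le_univ A
      rw [ZMod.card] at this
      exact_mod_cast this
    by_contra h; push Not at h; nlinarith
  set R : Finset (ZMod m) := Finset.univ.filter fun ξ => α * A.card ^ 2 / 2 ≤ ‖F ξ‖ ^ 2 with hR
  refine ⟨R, ?_, ?_⟩
  · have h1 : (R.card : ℝ) * (α * A.card ^ 2 / 2) ≤ m * A.card := by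
      rw [← hpars]
      calc (R.card : ℝ) * (α * A.card ^ 2 / 2) = ∑ _ξ ∈ R, (α * A.card ^ 2 / 2) := by simp
        _ ≤ ∑ ξ ∈ R, ‖F ξ‖ ^ 2 := Finset.sum_le_sum fun ξ hξ => (Finset.mem_filter.1 hξ).2
        _ ≤ ∑ ξ, ‖F ξ‖ ^ 2 := Finset.sum_le_sum_of_subset_of_nonneg (Finset.subset_univ _)
            fun _ _ _ => by positivity
    rw [le_div_iff₀ (by positivity)]
    have h2 : (R.card : ℝ) * (α * A.card ^ 2 / 2) * α ≤ A.card * A.card := by nlinarith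
    have h3 : ((R.card : ℝ) * α ^ 2) * (A.card * A.card) ≤ 2 * (A.card * A.card) := by nlinarith
    exact le_of_mul_le_mul_right h3 (by positivity)
  · intro x hx
    by_contra hcon
    push Not at hcon
    have hzero : ∑ ξ, ψ (ξ * x) * ((‖F ξ‖ ^ 4 : ℝ) : ℂ) = 0 := by
      calc ∑ ξ, ψ (ξ * x) * ((‖F ξ‖ ^ 4 : ℝ) : ℂ)
          = ∑ ξ, ∑ a ∈ A, ∑ b ∈ A, ∑ c ∈ A, ∑ d ∈ A, ψ (ξ * (x - (a + b - c - d))) := by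
            refine Finset.sum_congr rfl fun ξ _ => ?_
            have e : ((‖F ξ‖ ^ 4 : ℝ) : ℂ) = F ξ * (F ξ *
                ((starRingEnd ℂ) (F ξ) * (starRingEnd ℂ) (F ξ))) := by
              rw [show ‖F ξ‖ ^ 4 = ‖F ξ‖ ^ 2 * ‖F ξ‖ ^ 2 by ring, Complex.ofReal_mul, hsq]; ring
            rw [e, hconj]
            simp only [F, Finset.sum_mul, Finset.mul_sum]
            refine Finset.sum_congr rfl fun a _ => Finset.sum_congr rfl fun b _ =>
              Finset.sum_congr rfl fun c _ => Finset.sum_congr rfl fun d _ => ?_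
            simp only [← AddChar.map_add_eq_mul]; congr 1; ring
        _ = ∑ a ∈ A, ∑ b ∈ A, ∑ c ∈ A, ∑ d ∈ A, ∑ ξ, ψ (ξ * (x - (a + b - c - d))) := by
            rw [Finset.sum_comm]
            refine Finset.sum_congr rfl fun a _ => ?_
            rw [Finset.sum_comm]
            refine Finset.sum_congr rfl fun b _ => ?_
            rw [Finset.sum_comm]
            refine Finset.sum_congr rfl fun c _ => ?_
            rw [Finset.sum_comm]
        _ = 0 := by
            refine Finset.sum_eq_zero fun a ha => Finset.sum_eq_zero fun b hb =>
              Finset.sum_eq_zero fun c hc => Finset.sum_eq_zero fun d hd => ?_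
            rw [horth, if_neg]
            rw [sub_eq_zero]
            exact hcon a ha b hb c hc d hd
    have hre : ∑ ξ, (ψ (ξ * x)).re * ‖F ξ‖ ^ 4 = 0 := by
      have := congrArg Complex.re hzero
      rw [Complex.re_sum] at this
      simpa only [Complex.re_mul_ofReal, Complex.zero_re] using this
    have hcos : ∀ ξ ∈ R, 0 ≤ (ψ (ξ * x)).re := by
      intro ξ hξ
      have h1 : |((ξ * x).valMinAbs : ℝ) / m| ≤ 1 / 4 := by
        have := (norm_le_pi_norm (bohrLift R x) ⟨ξ, hξ⟩).trans hx
        rwa [Real.norm_eq_abs] at this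
      have h2 : ψ (ξ * x) = Complex.exp (((2 * Real.pi * ((ξ * x).valMinAbs / m) : ℝ) : ℂ)
          * Complex.I) := by
        conv_lhs => rw [← ZMod.coe_valMinAbs (ξ * x)]
        simp only [ψ]
        rw [ZMod.stdAddChar_coe]
        congr 1; push_cast; ring
      rw [h2, Complex.exp_ofReal_mul_I_re]
      rw [abs_le] at h1
      have hpi := Real.pi_pos
      apply Real.cos_nonneg_of_neg_pi_div_two_le_of_le <;> nlinarith
    have hge : ∀ ξ, -1 ≤ (ψ (ξ * x)).re := by
      intro ξ
      have h1 : ‖ψ (ξ * x)‖ = 1 := AddChar.norm_apply _ _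
      have h2 := Complex.abs_re_le_norm (ψ (ξ * x))
      rw [h1, abs_le] at h2
      exact h2.1
    have hterm : ∀ ξ, (if ξ = 0 then (A.card : ℝ) ^ 4 else 0) - (α * A.card ^ 2 / 2) * ‖F ξ‖ ^ 2
        ≤ (ψ (ξ * x)).re * ‖F ξ‖ ^ 4 := by
      intro ξ
      have hpos : 0 ≤ (α * A.card ^ 2 / 2) * ‖F ξ‖ ^ 2 := by positivity
      by_cases h0 : ξ = 0
      · subst h0
        have : ‖F 0‖ ^ 4 = (A.card : ℝ) ^ 4 := by
          rw [show ‖F 0‖ ^ 4 = (‖F 0‖ ^ 2) ^ 2 by ring, hF0]; ring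
        simp only [if_true, zero_mul, AddChar.map_zero_eq_one, Complex.one_re, one_mul, this]
        linarith
      · rw [if_neg h0]
        by_cases hξ : ξ ∈ R
        · have := hcos ξ hξ
          have : 0 ≤ (ψ (ξ * x)).re * ‖F ξ‖ ^ 4 := by positivity
          linarith
        · have h1 : ‖F ξ‖ ^ 2 < α * A.card ^ 2 / 2 := by simpa [hR] using hξ
          have h2 : ‖F ξ‖ ^ 4 ≤ (α * A.card ^ 2 / 2) * ‖F ξ‖ ^ 2 := by
            rw [show ‖F ξ‖ ^ 4 = ‖F ξ‖ ^ 2 * ‖F ξ‖ ^ 2 by ring]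
            gcongr
          have h3 := hge ξ
          have h4 : 0 ≤ ‖F ξ‖ ^ 4 := by positivity
          nlinarith
    have htot := Finset.sum_le_sum fun ξ (_ : ξ ∈ Finset.univ) => hterm ξ
    rw [hre, Finset.sum_sub_distrib, ← Finset.mul_sum, hpars] at htot
    simp at htot
    have : α * A.card ^ 2 / 2 * (m * A.card) ≤ (A.card : ℝ) ^ 4 / 2 := by
      calc α * A.card ^ 2 / 2 * (m * A.card) = (α * m) * ((A.card : ℝ) ^ 3 / 2) := by ring
        _ ≤ A.card * ((A.card : ℝ) ^ 3 / 2) := by gcongr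
        _ = _ := by ring
    have h5 : (0 : ℝ) < (A.card : ℝ) ^ 4 := by positivity
    linarith

lemma fin_sum_mem_nsmul (A : Finset ℤ) (n : ℕ) (a : Fin n → ℤ) (ha : ∀ i, a i ∈ A) :
    ∑ i, a i ∈ n • A := by
  induction n with
  | zero => simp
  | succ n ih =>
    rw [Fin.sum_univ_castSucc, succ_nsmul]
    exact Finset.add_mem_add (ih _ fun i => ha _) (ha _)

/-- Ruzsa's model lemma (order six). -/
lemma ruzsa_model (A : Finset ℤ) (m : ℕ) [NeZero m]
    (hm : 2 * (6 • A - 6 • A).card < m) :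
    ∃ A' ⊆ A, A.card ≤ 6 * A'.card ∧ ∃ φ : ℤ → ZMod m, ∀ a a' : Fin 6 → ℤ,
      (∀ i, a i ∈ A') → (∀ i, a' i ∈ A') →
      (∑ i, φ (a i) = ∑ i, φ (a' i) ↔ ∑ i, a i = ∑ i, a' i) := by
  classical
  set S := 6 • A - 6 • A with hS
  obtain ⟨p, hpge, hp⟩ := Nat.exists_infinite_primes (S.sup Int.natAbs + 2)
  have : Fact p.Prime := ⟨hp⟩
  have hp0 : 0 < p := hp.pos
  have hSp : ∀ x ∈ S, |x| < p := by
    intro x hx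
    have : x.natAbs ≤ S.sup Int.natAbs := Finset.le_sup (f := Int.natAbs) hx
    rw [Int.abs_eq_natAbs]
    omega
  have hSne : ∀ x ∈ S, x ≠ 0 → (x : ZMod p) ≠ 0 := by
    intro x hx hx0 h
    rw [ZMod.intCast_zmod_eq_zero_iff_dvd] at h
    exact hx0 (Int.eq_zero_of_abs_lt_dvd h (hSp x hx))
  -- choice of the dilation
  obtain ⟨u, hu0, hu⟩ : ∃ u : ZMod p, u ≠ 0 ∧ ∀ x ∈ S, x ≠ 0 → ∀ D : ℤ, |D| < p → (m : ℤ) ∣ D →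
      (D : ZMod p) ≠ u * x := by
    set E : ℕ := (p - 1) / m with hE
    let I : Finset ℤ := (Finset.Icc (-(E : ℤ)) E).erase 0
    have hI : I.card = 2 * E := by
      rw [Finset.card_erase_of_mem (by simp), Int.card_Icc]; omega
    let bad : Finset (ZMod p) := (S ×ˢ I).image fun q => ((m * q.2 : ℤ) : ZMod p) * (q.1 : ZMod p)⁻¹
    have hbad : bad.card < (Finset.univ.erase (0 : ZMod p)).card := by
      rw [Finset.card_erase_of_mem (Finset.mem_univ _), Finset.card_univ, ZMod.card]
      have h1 : bad.card ≤ S.card * (2 * E) := by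
        refine Finset.card_image_le.trans ?_
        rw [Finset.card_product, hI]
      have h2 : E * m ≤ p - 1 := Nat.div_mul_le_self _ _
      have h3 := hp.two_le
      rcases Nat.eq_zero_or_pos E with h0 | h0
      · rw [h0] at h1; omega
      · have : S.card * (2 * E) < E * m := by nlinarith
        omega
    obtain ⟨u, hu, hub⟩ := Finset.exists_mem_notMem_of_card_lt_card hbad
    refine ⟨u, (Finset.mem_erase.1 hu).1, ?_⟩
    intro x hx hx0 D hD hmD hDu
    apply hub
    obtain ⟨e, rfl⟩ := hmD
    have hxp := hSne x hx hx0
    refine Finset.mem_image.2 ⟨(x, e), Finset.mem_product.2 ⟨hx, ?_⟩, ?_⟩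
    · refine Finset.mem_erase.2 ⟨?_, ?_⟩
      · rintro rfl
        simp at hDu
        rcases hDu with h | h
        · exact (Finset.mem_erase.1 hu).1 h
        · exact hxp h
      · rw [Finset.mem_Icc, ← abs_le]
        rw [abs_mul, Nat.abs_cast] at hD
        have h1 : e.natAbs ≤ E := by
          rw [hE, Nat.le_div_iff_mul_le (Nat.pos_of_ne_zero (NeZero.ne m))]
          have : (m : ℤ) * e.natAbs < p := by rw [Int.natCast_natAbs]; exact hD
          have : m * e.natAbs < p := by exact_mod_cast this
          rw [mul_comm]; omega
        show |e| ≤ (E : ℤ)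
        rw [Int.abs_eq_natAbs]
        exact_mod_cast h1
    · simp only
      rw [hDu, mul_assoc, mul_inv_cancel₀ hxp, mul_one]
  -- the cell
  let π : ℤ → ℕ := fun a => (u * (a : ZMod p)).val
  have hπ : ∀ a, ((π a : ℕ) : ZMod p) = u * a := fun a => by simp [π]
  let cell : ℤ → Fin 6 := fun a => ⟨π a * 6 / p, by
    rw [Nat.div_lt_iff_lt_mul hp0, mul_comm]
    exact Nat.mul_lt_mul_of_pos_left (ZMod.val_lt _) (by norm_num)⟩
  obtain ⟨j, -, hj⟩ := Finset.exists_le_card_fiber_of_nsmul_le_card_of_maps_to (M := ℝ)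
    (s := A) (t := Finset.univ) (f := cell) (b := (A.card : ℝ) / 6) (fun _ _ => Finset.mem_univ _)
    ⟨0, Finset.mem_univ _⟩ (by simp; linarith)
  refine ⟨A.filter fun a => cell a = j, Finset.filter_subset _ _, ?_, fun a => ((π a : ℕ) : ZMod m), ?_⟩
  · have : (A.card : ℝ) ≤ 6 * (A.filter fun a => cell a = j).card := by linarith
    exact_mod_cast this
  intro a a' ha ha'
  have hcell : ∀ b ∈ A.filter (fun a => cell a = j), (j : ℕ) * p ≤ π b * 6 ∧ π b * 6 < (j + 1) * p := by
    intro b hb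
    have h1 : cell b = j := (Finset.mem_filter.1 hb).2
    have h2 : π b * 6 / p = j := by rw [← h1]
    have h3 := Nat.div_add_mod (π b * 6) p
    have h4 := Nat.mod_lt (π b * 6) hp0
    rw [h2, mul_comm p] at h3
    rw [add_mul, one_mul]
    constructor <;> omega
  have hsumb : ∀ a : Fin 6 → ℤ, (∀ i, a i ∈ A.filter fun a => cell a = j) →
      (j : ℕ) * p ≤ ∑ i, π (a i) ∧ ∑ i, π (a i) < (j + 1) * p := by
    intro a ha
    have h := fun i => hcell _ (ha i)
    have h0 := h 0
    have h1 := h 1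
    have h2 := h 2
    have h3 := h 3
    have h4 := h 4
    have h5 := h 5
    rw [Fin.sum_univ_six]
    constructor <;> omega
  set D : ℤ := (∑ i, π (a i) : ℕ) - (∑ i, π (a' i) : ℕ) with hD
  have hDp : |D| < p := by
    obtain ⟨h1, h2⟩ := hsumb a ha
    obtain ⟨h3, h4⟩ := hsumb a' ha'
    rw [add_mul, one_mul] at h2 h4
    rw [abs_lt]
    constructor <;> omega
  have hDu : (D : ZMod p) = u * ((∑ i, a i - ∑ i, a' i : ℤ) : ZMod p) := by
    rw [hD]; push_cast
    simp only [hπ, mul_sub, Finset.mul_sum]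
  constructor
  · intro h
    have hmD : (m : ℤ) ∣ D := by
      rw [← ZMod.intCast_zmod_eq_zero_iff_dvd, hD]
      push_cast
      rw [h, sub_self]
    by_contra hne
    refine hu (∑ i, a i - ∑ i, a' i) ?_ (sub_ne_zero.2 hne) D hDp hmD hDu
    rw [hS]
    exact Finset.sub_mem_sub
      (fin_sum_mem_nsmul A 6 a fun i => (Finset.mem_filter.1 (ha i)).1)
      (fin_sum_mem_nsmul A 6 a' fun i => (Finset.mem_filter.1 (ha' i)).1)
  · intro h
    have hpD : (p : ℤ) ∣ D := by
      rw [← ZMod.intCast_zmod_eq_zero_iff_dvd, hDu, h]; simp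
    have hD0 : D = 0 := Int.eq_zero_of_abs_lt_dvd hpD hDp
    have : (∑ i, π (a i)) = ∑ i, π (a' i) := by
      rw [hD0] at hD; omega
    have := congrArg (Nat.cast : ℕ → ZMod m) this
    push_cast at this
    exact this

lemma exists_bohr_model (K : ℝ) : ∃ C₀ d : ℕ, HasBohrModel K C₀ d := by
  classical
  set C₀ : ℕ := ⌈2 * K ^ 12⌉₊ + 1 with hC
  have hCr : (0 : ℝ) < C₀ := by exact_mod_cast (show 0 < C₀ by omega)
  refine ⟨C₀, ⌈2 / (1 / (6 * (C₀ : ℝ))) ^ 2⌉₊, ?_⟩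
  intro A hA hAA
  have hS := plunnecke_real A hA K hAA 6 6
  set m : ℕ := 2 * (6 • A - 6 • A).card + A.card with hm
  have hn := hA.card_pos
  have hnr : (0 : ℝ) < A.card := by exact_mod_cast hn
  have : NeZero m := ⟨by omega⟩
  have hmC : m ≤ C₀ * A.card := by
    have h1 : (m : ℝ) ≤ C₀ * A.card := by
      rw [hm, hC]; push_cast
      have := Nat.le_ceil (2 * K ^ 12)
      norm_num at hS
      nlinarith
    exact_mod_cast h1
  obtain ⟨A', hA'A, hA'c, φ, hφ⟩ := ruzsa_model A m (by omega)
  have hA'ne : A'.Nonempty := by rw [← Finset.card_pos]; omega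
  have hφinj : Set.InjOn φ A' := by
    intro a ha b hb hab
    have := (hφ (fun _ => a) (fun _ => b) (fun _ => ha) (fun _ => hb)).1 (by simp [hab])
    simp at this
    exact this
  have hcardφ : (A'.image φ).card = A'.card := Finset.card_image_of_injOn hφinj
  obtain ⟨R, hR, hrep⟩ := bogolyubov (A'.image φ) (hA'ne.image φ) (1 / (6 * C₀)) (by positivity) (by
    rw [hcardφ]
    have h1 : (m : ℝ) ≤ C₀ * A.card := by exact_mod_cast hmC
    have h2 : (A.card : ℝ) ≤ 6 * A'.card := by exact_mod_cast hA'c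
    rw [div_mul_eq_mul_div, div_le_iff₀ (by positivity)]
    nlinarith)
  have hrep' : ∀ x, ∃ q : ℤ × ℤ × ℤ × ℤ, ‖bohrLift R x‖ ≤ 1 / 4 →
      q.1 ∈ A' ∧ q.2.1 ∈ A' ∧ q.2.2.1 ∈ A' ∧ q.2.2.2 ∈ A' ∧
      x = φ q.1 + φ q.2.1 - φ q.2.2.1 - φ q.2.2.2 := by
    intro x
    by_cases hx : ‖bohrLift R x‖ ≤ 1 / 4
    · obtain ⟨_, ha, _, hb, _, hc, _, hd, he⟩ := hrep x hx
      obtain ⟨a, ha', rfl⟩ := Finset.mem_image.1 ha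
      obtain ⟨b, hb', rfl⟩ := Finset.mem_image.1 hb
      obtain ⟨c, hc', rfl⟩ := Finset.mem_image.1 hc
      obtain ⟨d, hd', rfl⟩ := Finset.mem_image.1 hd
      exact ⟨(a, b, c, d), fun _ => ⟨ha', hb', hc', hd', he⟩⟩
    · exact ⟨0, fun h => absurd h hx⟩
  choose q hq using hrep'
  have h6 : ∀ a1 a2 a3 a4 a5 a6 b1 b2 b3 b4 b5 b6 : ℤ, a1 ∈ A' → a2 ∈ A' → a3 ∈ A' → a4 ∈ A' →
      a5 ∈ A' → a6 ∈ A' → b1 ∈ A' → b2 ∈ A' → b3 ∈ A' → b4 ∈ A' → b5 ∈ A' → b6 ∈ A' →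
      (φ a1 + φ a2 + φ a3 + φ a4 + φ a5 + φ a6 = φ b1 + φ b2 + φ b3 + φ b4 + φ b5 + φ b6 ↔
        a1 + a2 + a3 + a4 + a5 + a6 = b1 + b2 + b3 + b4 + b5 + b6) := by
    intro a1 a2 a3 a4 a5 a6 b1 b2 b3 b4 b5 b6 ha1 ha2 ha3 ha4 ha5 ha6 hb1 hb2 hb3 hb4 hb5 hb6
    have := hφ ![a1, a2, a3, a4, a5, a6] ![b1, b2, b3, b4, b5, b6]
      (by intro i; fin_cases i <;> assumption) (by intro i; fin_cases i <;> assumption)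
    simpa [Fin.sum_univ_six] using this
  refine ⟨m, inferInstance, R, fun x => (q x).1 + (q x).2.1 - (q x).2.2.1 - (q x).2.2.2,
    hmC, by omega, ?_, ?_, ?_, ?_⟩
  · have := hR.trans (Nat.le_ceil _)
    exact_mod_cast this
  · intro x y hx hy hxy
    obtain ⟨x1, x2, x3, x4, hxe⟩ := hq x hx
    obtain ⟨y1, y2, y3, y4, hye⟩ := hq y hy
    obtain ⟨z1, z2, z3, z4, hze⟩ := hq (x + y) hxy
    have := (h6 _ _ _ _ _ _ _ _ _ _ _ _ x1 x2 y1 y2 z3 z4 z1 z2 x3 x4 y3 y4).1 (by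
      linear_combination hze - hxe - hye)
    simp only
    omega
  · intro x hx
    obtain ⟨x1, x2, x3, x4, hxe⟩ := hq x hx
    rw [two_nsmul, Finset.mem_sub]
    exact ⟨_, Finset.add_mem_add (hA'A x1) (hA'A x2), _, Finset.add_mem_add (hA'A x3) (hA'A x4),
      by simp only; ring⟩
  · intro x y hx hy hxy
    obtain ⟨x1, x2, x3, x4, hxe⟩ := hq x hx
    obtain ⟨y1, y2, y3, y4, hye⟩ := hq y hy
    simp only at hxy
    have := (h6 _ _ _ _ _ _ _ _ _ _ _ _ x1 x2 y3 y4 x1 x1 y1 y2 x3 x4 x1 x1).2 (by omega)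
    linear_combination hxe - hye + this

/-- For every `k ≥ 1` and `K > 0` there are `c₁, c₂ > 0` and `N` depending only
on `k` and `K` such that: if `n ≥ N` and `A₁, …, A_k ⊆ ℤ` each have size `n` and
satisfy `|Aᵢ + Aᵢ| ≤ K|Aᵢ|`, then there is a diagonal set `C ⊆ A₁ × ⋯ × A_k`
with `|C + C| ≤ c₁|C|` and `|C| ≥ c₂ n = c₂ (|A₁| ⋯ |A_k|)^{1/k}`. -/
theorem exists_diagonal_set (k : ℕ) (hk : 0 < k) (K : ℝ) (hK : 0 < K) :
    ∃ (c₁ c₂ : ℝ) (N : ℕ), 0 < c₁ ∧ 0 < c₂ ∧ 0 < N ∧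
      ∀ n : ℕ, N ≤ n → ∀ A : Fin k → Finset ℤ,
        (∀ i, (A i).card = n) →
        (∀ i, (((A i) + (A i)).card : ℝ) ≤ K * ((A i).card : ℝ)) →
        ∃ C : Finset (Fin k → ℤ),
          C ⊆ Fintype.piFinset A ∧
          IsDiagonal C ∧
          ((C + C).card : ℝ) ≤ c₁ * (C.card : ℝ) ∧
          c₂ * (n : ℝ) ≤ (C.card : ℝ) := by
  classical
  obtain ⟨k, rfl⟩ : ∃ j, k = j + 1 := ⟨k - 1, by omega⟩
  obtain ⟨C₀, d, hmod⟩ := exists_bohr_model (max K 1)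
  obtain ⟨c, X, hc, hX⟩ := exists_quasi_hom (max K 1) (le_max_right _ _) C₀ d hmod
  -- density of `C`, and the doubling bound
  set c₂ : ℝ := c ^ (k + 1) / (4 * X + 1) ^ k with hc₂
  have hc₂0 : 0 < c₂ := by positivity
  refine ⟨2 ^ (k + 1) * (4 * X + 1) / c₂, c₂, 1, by positivity, hc₂0, one_pos, ?_⟩
  intro n hn A hAn hAA
  have hnr : (1 : ℝ) ≤ n := by exact_mod_cast hn
  have hqh := fun i => hX (A i) (by rw [← Finset.card_pos, hAn]; omega)
    ((hAA i).trans (by gcongr; exact le_max_left _ _))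
  choose A' f h hsub hcard hmono hbd hquasi hinj using hqh
  simp only [hAn] at hcard hbd
  -- pigeonhole
  let I : Finset ℤ := Finset.Icc (-(2 * X * n : ℤ)) (2 * X * n)
  have hI : (I.card : ℝ) ≤ (4 * X + 1) * n := by
    have h1 : I.card = 4 * X * n + 1 := by
      have : (2 * X * n : ℤ) + 1 - -(2 * X * n : ℤ) = ((4 * X * n + 1 : ℕ) : ℤ) := by
        push_cast; ring
      simp only [I]
      rw [Int.card_Icc, this, Int.toNat_natCast]
    rw [h1]; push_cast; nlinarith
  have hIpos : 0 < I.card := Finset.card_pos.2 ⟨0, by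
    simp only [I, Finset.mem_Icc]; constructor
    · have : (0 : ℤ) ≤ 2 * X * n := by positivity
      omega
    · positivity⟩
  have hIr : (0 : ℝ) < I.card := by exact_mod_cast hIpos
  obtain ⟨s, -, hs⟩ := Finset.exists_le_card_fiber_of_nsmul_le_card_of_maps_to (M := ℝ)
    (s := Fintype.piFinset A') (t := Fintype.piFinset fun _ : Fin k => I)
    (f := fun (x : Fin (k + 1) → ℤ) (i : Fin k) => f i.succ (x i.succ) - f 0 (x 0))
    (b := c₂ * n) (by
      intro x hx
      rw [Fintype.mem_piFinset] at hx ⊢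
      intro i
      have h1 := hbd i.succ _ (hx i.succ)
      have h2 := hbd 0 _ (hx 0)
      rw [abs_le] at h1 h2
      simp only [I, Finset.mem_Icc]
      constructor <;> linarith) (by
      rw [Fintype.piFinset_nonempty]; exact fun _ => Finset.card_pos.1 hIpos) (by
      rw [Fintype.card_piFinset, Fintype.card_piFinset, nsmul_eq_mul]
      push_cast
      rw [Finset.prod_const, Finset.card_univ, Fintype.card_fin]
      calc (I.card : ℝ) ^ k * (c₂ * n) ≤ ((4 * X + 1) * n) ^ k * (c₂ * n) := by gcongr
        _ = ∏ _i : Fin (k + 1), c * (n : ℝ) := by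
            rw [Finset.prod_const, Finset.card_univ, Fintype.card_fin, hc₂, mul_pow]
            field_simp
            ring
        _ ≤ _ := Finset.prod_le_prod (fun _ _ => by positivity) fun i _ => hcard i)
  set C := Finset.filter (fun x : Fin (k + 1) → ℤ =>
    (fun i : Fin k => f i.succ (x i.succ) - f 0 (x 0)) = s) (Fintype.piFinset A') with hC
  have hCm : ∀ x ∈ C, (∀ i, x i ∈ A' i) ∧
      ∀ i, f i (x i) = f 0 (x 0) + (Fin.cons 0 s : Fin (k + 1) → ℤ) i := by
    intro x hx
    rw [hC, Finset.mem_filter, Fintype.mem_piFinset] at hx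
    refine ⟨hx.1, fun i => ?_⟩
    refine Fin.cases ?_ (fun i => ?_) i
    · simp
    · rw [Fin.cons_succ, ← hx.2]; ring
  set w : Fin (k + 1) → ℤ := Fin.cons 0 s with hw
  refine ⟨C, ?_, ?_, ?_, hs⟩
  · intro x hx
    rw [Fintype.mem_piFinset]
    exact fun i => hsub i ((hCm x hx).1 i)
  · intro x hx y hy hxy
    obtain ⟨hx1, hx2⟩ := hCm x hx
    obtain ⟨hy1, hy2⟩ := hCm y hy
    rcases lt_trichotomy (f 0 (x 0)) (f 0 (y 0)) with hlt | heq | hgt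
    · right
      intro i
      have h1 : f i (x i) < f i (y i) := by rw [hx2, hy2]; omega
      by_contra hcon
      rcases (show y i < x i ∨ y i = x i by omega) with h2 | h2
      · have := hmono i _ (hy1 i) _ (hx1 i) h2; omega
      · rw [h2] at h1; omega
    · exfalso; apply hxy
      funext i
      have h1 : f i (x i) = f i (y i) := by rw [hx2, hy2]; omega
      rcases lt_trichotomy (x i) (y i) with h2 | h2 | h2
      · have := hmono i _ (hx1 i) _ (hy1 i) h2; omega
      · exact h2
      · have := hmono i _ (hy1 i) _ (hx1 i) h2; omega
    · left
      intro i
      have h1 : f i (y i) < f i (x i) := by rw [hx2, hy2]; omega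
      by_contra hcon
      rcases (show x i < y i ∨ y i = x i by omega) with h2 | h2
      · have := hmono i _ (hx1 i) _ (hy1 i) h2; omega
      · rw [h2] at h1; omega
  · -- doubling
    let P : Finset (Fin (k + 1) → ℤ) := (I ×ˢ Fintype.piFinset fun _ : Fin (k + 1) =>
      ({0, 1} : Finset ℤ)).image fun q i => q.1 + 2 * w i + q.2 i
    have hP : (P.card : ℝ) ≤ (4 * X + 1) * n * 2 ^ (k + 1) := by
      have h1 : P.card ≤ I.card * 2 ^ (k + 1) := by
        refine Finset.card_image_le.trans ?_
        rw [Finset.card_product, Fintype.card_piFinset]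
        simp
      have h2 : (P.card : ℝ) ≤ I.card * 2 ^ (k + 1) := by exact_mod_cast h1
      refine h2.trans ?_
      gcongr
    have hCC : (C + C).card ≤ P.card := by
      refine Finset.card_le_card_of_injOn (fun z i => h i (z i)) ?_ ?_
      · intro z hz
        obtain ⟨x, hx, y, hy, rfl⟩ := Finset.mem_add.1 hz
        obtain ⟨hx1, hx2⟩ := hCm x hx
        obtain ⟨hy1, hy2⟩ := hCm y hy
        refine Finset.mem_coe.2 (Finset.mem_image.2 ⟨(f 0 (x 0) + f 0 (y 0),
          fun i => h i (x i + y i) - (f i (x i) + f i (y i))), ?_, ?_⟩)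
        · rw [Finset.mem_product, Fintype.mem_piFinset]
          constructor
          · have h1 := hbd 0 _ (hx1 0)
            have h2 := hbd 0 _ (hy1 0)
            rw [abs_le] at h1 h2
            simp only [I, Finset.mem_Icc]
            constructor <;> linarith
          · intro i
            have := hquasi i _ (hx1 i) _ (hy1 i)
            simp only [Finset.mem_insert, Finset.mem_singleton]
            omega
        · funext i
          simp only [Pi.add_apply]
          rw [hx2 i, hy2 i]; ring
      · intro z hz z' hz' hzz
        obtain ⟨x, hx, y, hy, rfl⟩ := Finset.mem_add.1 hz
        obtain ⟨x', hx', y', hy', rfl⟩ := Finset.mem_add.1 hz'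
        funext i
        have := congrFun hzz i
        simp only [Pi.add_apply] at this ⊢
        exact hinj i _ ((hCm x hx).1 i) _ ((hCm y hy).1 i) _ ((hCm x' hx').1 i) _
          ((hCm y' hy').1 i) this
    have hCCr : ((C + C).card : ℝ) ≤ P.card := by exact_mod_cast hCC
    calc ((C + C).card : ℝ) ≤ (4 * X + 1) * n * 2 ^ (k + 1) := hCCr.trans hP
      _ = 2 ^ (k + 1) * (4 * X + 1) / c₂ * (c₂ * n) := by field_simp
      _ ≤ _ := by gcongr
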